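/- Let G be a finite simple graph on n vertices of girth at least 5, and let A be any Hermitian weighted adjacency matrix of G. Then n_{≥0}(A) ≥ n/4. -/

import Mathlib

open Matrix Finset

/-- A graph is `C4`-free if it has no cycle of length 4 as a (not necessarily induced)
subgraph: there are no four pairwise distinct vertices `a, b, c, d` with
`ab`, `bc`, `cd`, `da` all edges. -/
def C4Free {V : Type*} (G : SimpleGraph V) : Prop :=
  ∀ a b c d : V, a ≠ b → a ≠ c → a ≠ d → b ≠ c → b ≠ d → c ≠ d →
    G.Adj a b → G.Adj b c → G.Adj c d → ¬ G.Adj d a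

/-!
Let `A` be a Hermitian weighting of `G` in which every row satisfies `∑ j, ‖A i j‖ ^ 2 = 1`. Then
`tr A = tr (A ^ 3) = 0` because there are no loops and no triangles, `tr (A ^ 2) = n`, and
`tr (A ^ 4) ≤ 2 * n` because in the absence of 4-cycles only degenerate closed walks of length 4
contribute. Summing over the eigenvalues a quartic polynomial that lies below the indicator of
`[0, ∞)` gives `n / 4 ≤ n_{≥0}(A)`.

The index `n_{≥0}` is invariant under congruence by invertible diagonal matrices, so it suffices to
rescale `A` to nearly unit rows: the index is an integer, and a total squared defect below `1`
already yields the bound. Such scalings are the almost critical points of a function that is bounded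
below as soon as the support of `A` contains a permutation. If it contains none, Hall's theorem
provides an independent set `S` whose neighbours all lie in a set `T` disjoint from `S` with
`|T| < |S|`. Deleting `S ∪ T` removes fewer than `2 * |S|` vertices, while `S` splits off a zero
block contributing `|S|` to the index, and one concludes by induction.
-/

section Inertia

open scoped ComplexOrder

theorem posSemidef_fromBlocks_zero {ι V R : Type*} [Finite ι] [Finite V] [Ring R] [PartialOrder R]
    [StarRing R] {M : Matrix V V R} (hM : M.PosSemidef) :
    (fromBlocks (0 : Matrix ι ι R) 0 0 M).PosSemidef := by
  have := Fintype.ofFinite ι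
  have := Fintype.ofFinite V
  refine .of_dotProduct_mulVec_nonneg (by simpa [IsHermitian, fromBlocks_conjTranspose]
    using hM.isHermitian) fun x ↦ ?_
  simpa [fromBlocks_mulVec, dotProduct] using hM.dotProduct_mulVec_nonneg (x ∘ Sum.inr)

variable {U V ι 𝕜 : Type*} [Fintype U] [Fintype V] [RCLike 𝕜]

theorem mulVec_injective_of_mul_eq_one {R : Type*} [Semiring R] [DecidableEq U] {P : Matrix V U R}
    {Q : Matrix U V R} (h : Q * P = 1) : Function.Injective P.mulVec :=
  Function.LeftInverse.injective (g := Q.mulVec) fun x ↦ by rw [mulVec_mulVec, h, one_mulVec]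

variable [DecidableEq V]

/-- `n_{≥0}(A)`: the number of non-negative eigenvalues of a Hermitian matrix, counted with
multiplicity. -/
noncomputable def nonnegIndex {A : Matrix V V 𝕜} (hA : A.IsHermitian) : ℕ :=
  Fintype.card {i // 0 ≤ hA.eigenvalues i}

theorem star_dotProduct_mulVec_eq_sum_eigenvalues {A : Matrix V V 𝕜} (hA : A.IsHermitian)
    (x : V → 𝕜) : star x ⬝ᵥ A *ᵥ x = ((∑ i, hA.eigenvalues i *
      ‖(star (hA.eigenvectorUnitary : Matrix V V 𝕜) *ᵥ x) i‖ ^ 2 : ℝ) : 𝕜) := by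
  conv_lhs => rw [hA.spectral_theorem, Unitary.conjStarAlgAut_apply, ← mulVec_mulVec,
    ← mulVec_mulVec, dotProduct_mulVec]
  set y := star (hA.eigenvectorUnitary : Matrix V V 𝕜) *ᵥ x with hy
  have hstar : star x ᵥ* (hA.eigenvectorUnitary : Matrix V V 𝕜) = star y := by
    rw [hy, star_mulVec, star_eq_conjTranspose, conjTranspose_conjTranspose]
  rw [hstar, dotProduct, RCLike.ofReal_sum]
  refine sum_congr rfl fun i _ ↦ ?_
  rw [mulVec_diagonal, Pi.star_apply, mul_left_comm, RCLike.star_def, RCLike.conj_mul]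
  simp

theorem card_le_nonnegIndex {A : Matrix V V 𝕜} (hA : A.IsHermitian) {P : Matrix V U 𝕜}
    (hP : Function.Injective P.mulVec) (hpos : (Pᴴ * A * P).PosSemidef) :
    Fintype.card U ≤ nonnegIndex hA := by
  let Q : Matrix V U 𝕜 := star (hA.eigenvectorUnitary : Matrix V V 𝕜) * P
  have hQ : Function.Injective Q.mulVec := by
    have hunit : Function.Injective (star (hA.eigenvectorUnitary : Matrix V V 𝕜)).mulVec :=
      mulVec_injective_of_mul_eq_one (Unitary.coe_mul_star_self hA.eigenvectorUnitary)
    simpa only [Q, mulVec_mulVec, Function.comp_def] using hunit.comp hP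
  have hform (x : U → 𝕜) : 0 ≤ ∑ i, hA.eigenvalues i * ‖(Q *ᵥ x) i‖ ^ 2 := by
    have h := hpos.dotProduct_mulVec_nonneg x
    rwa [← mulVec_mulVec, ← mulVec_mulVec, dotProduct_mulVec, ← star_mulVec,
      star_dotProduct_mulVec_eq_sum_eigenvalues hA, mulVec_mulVec, RCLike.ofReal_nonneg] at h
  let R : (U → 𝕜) →ₗ[𝕜] ({i // 0 ≤ hA.eigenvalues i} → 𝕜) :=
    LinearMap.funLeft 𝕜 𝕜 Subtype.val ∘ₗ Q.mulVecLin
  have hR : Function.Injective R := by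
    rw [injective_iff_map_eq_zero]
    intro x hx
    have hvanish (i : V) (hi : 0 ≤ hA.eigenvalues i) : (Q *ᵥ x) i = 0 := congrFun hx ⟨i, hi⟩
    have hterm (i : V) : hA.eigenvalues i * ‖(Q *ᵥ x) i‖ ^ 2 ≤ 0 := by
      rcases le_or_gt 0 (hA.eigenvalues i) with hi | hi
      · simp [hvanish i hi]
      · exact mul_nonpos_of_nonpos_of_nonneg hi.le (sq_nonneg _)
    have hsum := le_antisymm (sum_nonpos fun i _ ↦ hterm i) (hform x)
    rw [sum_eq_zero_iff_of_nonpos fun i _ ↦ hterm i] at hsum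
    refine hQ (funext fun i ↦ ?_)
    rw [mulVec_zero, Pi.zero_apply]
    rcases le_or_gt 0 (hA.eigenvalues i) with hi | hi
    · exact hvanish i hi
    · simpa [hi.ne] using hsum i (mem_univ i)
  simpa [nonnegIndex] using LinearMap.finrank_le_finrank_of_injective hR

theorem exists_isometry_posSemidef {A : Matrix V V 𝕜} (hA : A.IsHermitian) :
    ∃ P : Matrix V {i // 0 ≤ hA.eigenvalues i} 𝕜, Pᴴ * P = 1 ∧ (Pᴴ * A * P).PosSemidef := by
  let W : Matrix V V 𝕜 := hA.eigenvectorUnitary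
  have hW1 : Wᴴ * W = 1 := Unitary.coe_star_mul_self hA.eigenvectorUnitary
  have hWA : Wᴴ * A * W = diagonal (RCLike.ofReal ∘ hA.eigenvalues) := by
    simpa [W, star_eq_conjTranspose] using hA.conjStarAlgAut_star_eigenvectorUnitary
  let P : Matrix V {i // 0 ≤ hA.eigenvalues i} 𝕜 := W.submatrix id Subtype.val
  have hP (M : Matrix V V 𝕜) : Pᴴ * M * P = (Wᴴ * M * W).submatrix Subtype.val Subtype.val := rfl
  refine ⟨P, ?_, ?_⟩
  · rw [← Matrix.mul_one Pᴴ, hP, Matrix.mul_one, hW1, submatrix_one _ Subtype.val_injective]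
  · rw [hP, hWA, submatrix_diagonal _ _ Subtype.val_injective]
    exact .diagonal fun i ↦ RCLike.ofReal_nonneg.2 i.2

theorem nonnegIndex_conjTranspose_mul_mul_le [DecidableEq U] {A : Matrix V V 𝕜}
    (hA : A.IsHermitian) {P : Matrix V U 𝕜} (hP : Function.Injective P.mulVec) :
    nonnegIndex (isHermitian_conjTranspose_mul_mul P hA) ≤ nonnegIndex hA := by
  obtain ⟨Q, hQ, hpos⟩ := exists_isometry_posSemidef (isHermitian_conjTranspose_mul_mul P hA)
  refine card_le_nonnegIndex hA (P := P * Q) ?_ ?_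
  · simpa only [mulVec_mulVec, Function.comp_def] using
      hP.comp (mulVec_injective_of_mul_eq_one hQ)
  · simpa only [conjTranspose_mul, Matrix.mul_assoc] using hpos

theorem nonnegIndex_submatrix_le [DecidableEq U] {A : Matrix V V 𝕜} (hA : A.IsHermitian)
    {e : U → V} (he : Function.Injective e) :
    nonnegIndex (hA.submatrix e) ≤ nonnegIndex hA := by
  have hcompress (M : Matrix V V 𝕜) :
      ((1 : Matrix V V 𝕜).submatrix id e)ᴴ * M * (1 : Matrix V V 𝕜).submatrix id e =
        M.submatrix e e := by
    ext i j
    simp [Matrix.mul_apply, Matrix.one_apply]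
  have hP := mulVec_injective_of_mul_eq_one (P := (1 : Matrix V V 𝕜).submatrix id e)
    (Q := (submatrix 1 id e)ᴴ) (by simpa [submatrix_one _ he] using hcompress 1)
  simpa only [hcompress] using nonnegIndex_conjTranspose_mul_mul_le hA hP

theorem card_add_nonnegIndex_le_fromBlocks_zero [Fintype ι] [DecidableEq ι] {B : Matrix V V 𝕜}
    (hB : B.IsHermitian) (h : (fromBlocks (0 : Matrix ι ι 𝕜) 0 0 B).IsHermitian) :
    Fintype.card ι + nonnegIndex hB ≤ nonnegIndex h := by
  obtain ⟨P, hP, hpos⟩ := exists_isometry_posSemidef hB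
  rw [nonnegIndex, ← Fintype.card_sum]
  refine card_le_nonnegIndex h (P := fromBlocks 1 0 0 P)
    (mulVec_injective_of_mul_eq_one (Q := fromBlocks 1 0 0 Pᴴ) ?_) ?_
  · simp [fromBlocks_multiply, hP, fromBlocks_one]
  · simpa [fromBlocks_conjTranspose, fromBlocks_multiply] using posSemidef_fromBlocks_zero hpos

end Inertia

section Moments

theorem norm_apply_comm {V E : Type*} [SeminormedAddCommGroup E] [StarAddMonoid E]
    [NormedStarGroup E] {A : Matrix V V E} (hA : A.IsHermitian) (i j : V) : ‖A i j‖ = ‖A j i‖ := by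
  rw [← hA.apply i j, norm_star]

variable {V 𝕜 : Type*} [Fintype V] [RCLike 𝕜] {A : Matrix V V 𝕜}

theorem trace_pow_eq_sum_eigenvalues_pow [DecidableEq V] (hA : A.IsHermitian) (k : ℕ) :
    (A ^ k).trace = ((∑ i, hA.eigenvalues i ^ k : ℝ) : 𝕜) := by
  conv_lhs => rw [hA.spectral_theorem, ← map_pow, Unitary.conjStarAlgAut_apply, trace_mul_comm,
    ← Matrix.mul_assoc, Unitary.coe_star_mul_self, Matrix.one_mul, diagonal_pow, trace_diagonal]
  simp

theorem mul_self_apply_self (hA : A.IsHermitian) (i : V) :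
    (A * A) i i = ((∑ j, ‖A i j‖ ^ 2 : ℝ) : 𝕜) := by
  rw [mul_apply, RCLike.ofReal_sum]
  refine sum_congr rfl fun j _ ↦ ?_
  rw [← hA.apply j i, RCLike.star_def, RCLike.mul_conj, RCLike.ofReal_pow]

theorem trace_mul_self (hA : A.IsHermitian) :
    (A * A).trace = ((∑ i, ∑ j, ‖A i j‖ ^ 2 : ℝ) : 𝕜) := by
  rw [trace, RCLike.ofReal_sum]
  exact sum_congr rfl fun i _ ↦ mul_self_apply_self hA i

variable [DecidableEq V]

theorem sum_eigenvalues_sq (hA : A.IsHermitian) :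
    ∑ i, hA.eigenvalues i ^ 2 = ∑ i, ∑ j, ‖A i j‖ ^ 2 := by
  have h := trace_pow_eq_sum_eigenvalues_pow hA 2
  rw [sq, trace_mul_self hA] at h
  exact_mod_cast h.symm

theorem sum_eigenvalues_pow_four (hA : A.IsHermitian) :
    ∑ i, hA.eigenvalues i ^ 4 = ∑ i, ∑ j, ‖(A * A) i j‖ ^ 2 := by
  have h := trace_pow_eq_sum_eigenvalues_pow hA 4
  rw [pow_add A 2 2, sq, trace_mul_self (sq A ▸ hA.pow 2)] at h
  exact_mod_cast h.symm

end Moments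

section Weighting

variable {U V 𝕜 : Type*} {G : SimpleGraph V}

theorem C4Free.subsingleton_commonNeighbors (hG : C4Free G) {i j : V} (hij : i ≠ j) :
    (G.commonNeighbors i j).Subsingleton := by
  intro k hk l hl
  rw [SimpleGraph.mem_commonNeighbors] at hk hl
  by_contra hkl
  exact hG i k j l hk.1.ne hij hl.1.ne hk.2.ne' hkl hl.2.ne hk.1 hk.2.symm hl.2 hl.1.symm

theorem C4Free.comap (hG : C4Free G) (f : U ↪ V) : C4Free (G.comap f) :=
  fun a b c d hab hac had hbc hbd hcd ↦ hG (f a) (f b) (f c) (f d) (f.injective.ne hab)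
    (f.injective.ne hac) (f.injective.ne had) (f.injective.ne hbc) (f.injective.ne hbd)
    (f.injective.ne hcd)

theorem norm_sum_sq_of_subsingleton_support {ι E : Type*} [Fintype ι]
    [SeminormedAddCommGroup E] {f : ι → E} (hf : f.support.Subsingleton) :
    ‖∑ i, f i‖ ^ 2 = ∑ i, ‖f i‖ ^ 2 := by
  rcases hf.eq_empty_or_singleton with h | ⟨k, h⟩
  · simp [Function.support_eq_empty_iff.1 h]
  · have hzero (i : ι) (hi : i ≠ k) : f i = 0 := by
      rwa [← Function.notMem_support, h, Set.mem_singleton_iff]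
    rw [Fintype.sum_eq_single k hzero, Fintype.sum_eq_single k fun i hi ↦ by simp [hzero i hi]]

variable [RCLike 𝕜]

/-- `A` is a Hermitian weighted adjacency matrix of `G`. Entries at edges may vanish, so `G` is
only an upper bound for the support of `A`. -/
structure IsHermitianWeighting (G : SimpleGraph V) (A : Matrix V V 𝕜) : Prop where
  isHermitian : A.IsHermitian
  apply_eq_zero : ∀ i j, ¬ G.Adj i j → A i j = 0

namespace IsHermitianWeighting

variable {A : Matrix V V 𝕜}

theorem adj (hA : IsHermitianWeighting G A) {i j : V} (hij : A i j ≠ 0) : G.Adj i j :=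
  not_not.1 <| mt (hA.apply_eq_zero i j) hij

theorem submatrix (hA : IsHermitianWeighting G A) (f : U → V) :
    IsHermitianWeighting (G.comap f) (A.submatrix f f) :=
  ⟨hA.isHermitian.submatrix f, fun i j ↦ hA.apply_eq_zero (f i) (f j)⟩

variable [Fintype V]

theorem norm_mul_self_apply_sq (hA : IsHermitianWeighting G A) (hC4 : C4Free G) {i j : V}
    (hij : i ≠ j) : ‖(A * A) i j‖ ^ 2 = ∑ k, ‖A i k‖ ^ 2 * ‖A k j‖ ^ 2 := by
  rw [mul_apply, norm_sum_sq_of_subsingleton_support]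
  · simp only [norm_mul, mul_pow]
  · refine (hC4.subsingleton_commonNeighbors hij).anti fun k hk ↦ ?_
    rw [Function.mem_support, mul_ne_zero_iff] at hk
    exact ⟨hA.adj hk.1, (hA.adj hk.2).symm⟩

theorem sum_norm_mul_self_sq_le (hA : IsHermitianWeighting G A) (hC4 : C4Free G) :
    ∑ i, ∑ j, ‖(A * A) i j‖ ^ 2 ≤ 2 * ∑ i, (∑ j, ‖A i j‖ ^ 2) ^ 2 := by
  classical
  have hentry (i j : V) : ‖(A * A) i j‖ ^ 2 ≤
      (if i = j then (∑ k, ‖A i k‖ ^ 2) ^ 2 else 0) + ∑ k, ‖A i k‖ ^ 2 * ‖A k j‖ ^ 2 := by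
    split_ifs with hij
    · subst hij
      rw [mul_self_apply_self hA.isHermitian, RCLike.norm_ofReal, sq_abs]
      exact le_add_of_nonneg_right (by positivity)
    · rw [hA.norm_mul_self_apply_sq hC4 hij, zero_add]
  have hpaths : ∑ i, ∑ j, ∑ k, ‖A i k‖ ^ 2 * ‖A k j‖ ^ 2 = ∑ k, (∑ j, ‖A k j‖ ^ 2) ^ 2 := by
    rw [sum_comm_cycle]
    refine sum_congr rfl fun k _ ↦ ?_
    rw [sq, sum_mul_sum]
    exact sum_congr rfl fun i _ ↦ sum_congr rfl fun j _ ↦ by rw [norm_apply_comm hA.isHermitian i]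
  calc ∑ i, ∑ j, ‖(A * A) i j‖ ^ 2
    _ ≤ ∑ i, ∑ j, ((if i = j then (∑ k, ‖A i k‖ ^ 2) ^ 2 else 0) +
        ∑ k, ‖A i k‖ ^ 2 * ‖A k j‖ ^ 2) := by gcongr; exact hentry _ _
    _ = 2 * ∑ i, (∑ j, ‖A i j‖ ^ 2) ^ 2 := by
      simp only [sum_add_distrib, hpaths, sum_ite_eq, mem_univ, if_true]
      ring

variable [DecidableEq V]

theorem diagonal_congruence (hA : IsHermitianWeighting G A) (w : V → 𝕜) :
    IsHermitianWeighting G ((diagonal w)ᴴ * A * diagonal w) :=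
  ⟨isHermitian_conjTranspose_mul_mul _ hA.isHermitian, fun i j hij ↦ by
    rw [diagonal_conjTranspose, mul_diagonal, diagonal_mul, hA.apply_eq_zero i j hij]; simp⟩

theorem sum_eigenvalues_eq_zero (hA : IsHermitianWeighting G A) :
    ∑ i, hA.isHermitian.eigenvalues i = 0 := by
  have htrace : A.trace = 0 := sum_eq_zero fun i _ ↦ hA.apply_eq_zero i i G.irrefl
  have h := hA.isHermitian.trace_eq_sum_eigenvalues
  rw [htrace] at h
  exact_mod_cast h.symm

theorem trace_pow_three_eq_zero (hA : IsHermitianWeighting G A) (hC3 : G.CliqueFree 3) :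
    (A ^ 3).trace = 0 := by
  refine sum_eq_zero fun i _ ↦ ?_
  simp only [pow_succ, pow_zero, Matrix.one_mul, diag_apply, mul_apply, sum_mul]
  refine sum_eq_zero fun j _ ↦ sum_eq_zero fun k _ ↦ ?_
  by_contra h
  simp only [mul_ne_zero_iff] at h
  exact hC3 {i, k, j} <| SimpleGraph.is3Clique_triple_iff.2
    ⟨hA.adj h.1.1, (hA.adj h.2).symm, hA.adj h.1.2⟩

theorem sum_eigenvalues_pow_three_eq_zero (hA : IsHermitianWeighting G A)
    (hC3 : G.CliqueFree 3) : ∑ i, hA.isHermitian.eigenvalues i ^ 3 = 0 := by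
  have h := trace_pow_eq_sum_eigenvalues_pow hA.isHermitian 3
  rw [hA.trace_pow_three_eq_zero hC3] at h
  exact_mod_cast h.symm

end IsHermitianWeighting

end Weighting

section SpectralBound

-- The quartic is determined by agreeing with the indicator of `[0, ∞)` to first order at `±√2` and
-- vanishing at `0`: these points, with masses `1/4`, `1/4` and `1/2`, form the extremal spectrum
-- with moments `0, 1, 0, 2`.
theorem quartic_le_indicator_nonneg (x : ℝ) :
    x ^ 2 / 2 - x ^ 4 / 8 + 3 * √2 / 8 * x - √2 / 16 * x ^ 3 ≤ if 0 ≤ x then 1 else 0 := by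
  have hsq : √2 ^ 2 = (2 : ℝ) := Real.sq_sqrt zero_le_two
  have hcube : √2 ^ 3 = 2 * √2 := by rw [pow_succ, hsq]
  split_ifs with hx
  · have hfactor : 1 - (x ^ 2 / 2 - x ^ 4 / 8 + 3 * √2 / 8 * x - √2 / 16 * x ^ 3) =
        (x - √2) ^ 2 * (x ^ 2 / 8 + 5 * √2 / 16 * x + 1 / 2) := by
      linear_combination (x ^ 2 / 2 - 1 / 2) * hsq - 5 / 16 * x * hcube
    have hnonneg : 0 ≤ (x - √2) ^ 2 * (x ^ 2 / 8 + 5 * √2 / 16 * x + 1 / 2) := by positivity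
    linarith
  · have hfactor : x ^ 2 / 2 - x ^ 4 / 8 + 3 * √2 / 8 * x - √2 / 16 * x ^ 3 =
        x * ((x + √2) ^ 2 * (3 * √2 / 16 - x / 8)) := by
      linear_combination -(x ^ 2 / 4) * hsq - 3 / 16 * x * hcube
    rw [hfactor]
    have hlast : 0 ≤ 3 * √2 / 16 - x / 8 := by linarith [Real.sqrt_nonneg 2]
    exact mul_nonpos_of_nonpos_of_nonneg (not_le.1 hx).le (by positivity)

variable {V 𝕜 : Type*} [Fintype V] [DecidableEq V] [RCLike 𝕜] {G : SimpleGraph V}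
  {A : Matrix V V 𝕜}

theorem sum_quartic_eigenvalues_le (hA : A.IsHermitian) :
    (∑ i, hA.eigenvalues i ^ 2) / 2 - (∑ i, hA.eigenvalues i ^ 4) / 8 +
      3 * √2 / 8 * ∑ i, hA.eigenvalues i - √2 / 16 * ∑ i, hA.eigenvalues i ^ 3 ≤
      nonnegIndex hA := by
  have h := sum_le_sum fun i (_ : i ∈ univ) ↦ quartic_le_indicator_nonneg (hA.eigenvalues i)
  simpa only [nonnegIndex, sum_add_distrib, sum_sub_distrib, ← mul_sum, ← sum_div, ← sum_filter,
    sum_const, nsmul_one, ← Fintype.card_subtype] using h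

theorem IsHermitianWeighting.card_sub_le (hA : IsHermitianWeighting G A) (hC3 : G.CliqueFree 3)
    (hC4 : C4Free G) :
    Fintype.card V - ∑ i, (∑ j, ‖A i j‖ ^ 2 - 1) ^ 2 ≤ 4 * (nonnegIndex hA.isHermitian : ℝ) := by
  have hfour : ∑ i, hA.isHermitian.eigenvalues i ^ 4 ≤ 2 * ∑ i, (∑ j, ‖A i j‖ ^ 2) ^ 2 :=
    (sum_eigenvalues_pow_four hA.isHermitian).trans_le (hA.sum_norm_mul_self_sq_le hC4)
  have hdefect : ∑ i, (∑ j, ‖A i j‖ ^ 2 - 1) ^ 2 =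
      ∑ i, (∑ j, ‖A i j‖ ^ 2) ^ 2 - 2 * ∑ i, ∑ j, ‖A i j‖ ^ 2 + Fintype.card V := by
    simp [sub_sq, sum_add_distrib, ← mul_sum]
  have hquartic := sum_quartic_eigenvalues_le hA.isHermitian
  rw [hA.sum_eigenvalues_eq_zero, sum_eigenvalues_sq,
    hA.sum_eigenvalues_pow_three_eq_zero hC3] at hquartic
  linarith

end SpectralBound

section SmallGradient

theorem exists_norm_gradient_lt {E : Type*} [NormedAddCommGroup E] [InnerProductSpace ℝ E]
    [ProperSpace E] {f : E → ℝ} {f' : E → E} (hf : ∀ x, HasGradientAt f (f' x) x)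
    (hbdd : BddBelow (Set.range f)) {ε : ℝ} (hε : 0 < ε) : ∃ x, ‖f' x‖ < ε := by
  obtain ⟨L, hL⟩ := hbdd
  replace hL (x : E) : L ≤ f x := hL ⟨x, rfl⟩
  obtain ⟨δ, hδ, hδε⟩ : ∃ δ : ℝ, 0 < δ ∧ δ * (2 * (f 0 - L)) < ε ^ 2 := by
    have hC : 0 ≤ 2 * (f 0 - L) := by linarith [hL 0]
    refine ⟨ε ^ 2 / (2 * (f 0 - L) + 1), by positivity, ?_⟩
    rw [div_mul_eq_mul_div, div_lt_iff₀ (by positivity)]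
    nlinarith [sq_pos_of_pos hε]
  -- The infimum of `f` need not be attained, but that of its coercive perturbation `g` is.
  let g : E → ℝ := fun x ↦ f x + δ / 2 * ‖x‖ ^ 2
  have hg (x : E) : HasFDerivAt g (innerSL ℝ (f' x + δ • x)) x := by
    refine ((hf x).hasFDerivAt.fun_add
      ((hasStrictFDerivAt_norm_sq x).hasFDerivAt.const_mul (δ / 2))).congr_fderiv ?_
    ext d
    simp only [_root_.add_apply, InnerProductSpace.toDual_apply_apply, _root_.smul_apply,
      innerSL_apply_apply, inner_add_left, real_inner_smul_left, smul_eq_mul, nsmul_eq_mul]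
    ring
  have hcoercive : Filter.Tendsto g (Filter.cocompact E) Filter.atTop := by
    have hsq : Filter.Tendsto (fun x : E ↦ L + δ / 2 * ‖x‖ ^ 2) (Filter.cocompact E)
        Filter.atTop :=
      Filter.tendsto_atTop_add_const_left _ _ <| Filter.Tendsto.const_mul_atTop (half_pos hδ) <|
        (Filter.tendsto_pow_atTop two_ne_zero).comp (tendsto_norm_cocompact_atTop (E := E))
    exact Filter.tendsto_atTop_mono (fun x ↦ by simpa [g] using hL x) hsq
  have hcont : Continuous g := continuous_iff_continuousAt.2 fun x ↦ (hg x).continuousAt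
  obtain ⟨x, hx⟩ := hcont.exists_forall_le hcoercive
  have hcrit : f' x = -(δ • x) := by
    have hzero : innerSL ℝ (f' x + δ • x) = 0 :=
      IsLocalMin.hasFDerivAt_eq_zero (.of_forall hx) (hg x)
    refine eq_neg_of_add_eq_zero_left (norm_eq_zero.1 ?_)
    rw [← innerSL_apply_norm ℝ, hzero, norm_zero]
  refine ⟨x, ?_⟩
  have hmin : f x + δ / 2 * ‖x‖ ^ 2 ≤ f 0 := by simpa [g] using hx 0
  rw [hcrit, norm_neg, norm_smul, Real.norm_of_nonneg hδ.le]
  refine lt_of_pow_lt_pow_left₀ 2 hε.le ?_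
  nlinarith [hL x]

end SmallGradient

section Scaling

variable {V : Type*} [Fintype V] {B : V → V → ℝ}

/-- The convex function of `y` whose critical points are the logarithms `y = log d` of the scalings
making all row sums of `B i j * (d i * d j)` equal to one, for a symmetric weight `B`. -/
noncomputable def scalingPotential (B : V → V → ℝ) (y : EuclideanSpace ℝ V) : ℝ :=
  1 / 2 * ∑ i, ∑ j, B i j * Real.exp (y i + y j) - ∑ i, y i

theorem bddBelow_range_scalingPotential (hB : ∀ i j, 0 ≤ B i j) {σ : Equiv.Perm V}
    (hσ : ∀ i, 0 < B i (σ i)) : BddBelow (Set.range (scalingPotential B)) := by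
  refine ⟨(∑ i, (Real.log (B i (σ i)) + 1)) / 2, ?_⟩
  rintro _ ⟨y, rfl⟩
  have hrow (i : V) : y i + y (σ i) + (Real.log (B i (σ i)) + 1) ≤
      ∑ j, B i j * Real.exp (y i + y j) :=
    calc y i + y (σ i) + (Real.log (B i (σ i)) + 1)
      _ = Real.log (B i (σ i)) + (y i + y (σ i)) + 1 := by ring
      _ ≤ Real.exp (Real.log (B i (σ i)) + (y i + y (σ i))) := Real.add_one_le_exp _
      _ = B i (σ i) * Real.exp (y i + y (σ i)) := by rw [Real.exp_add, Real.exp_log (hσ i)]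
      _ ≤ ∑ j, B i j * Real.exp (y i + y j) :=
        single_le_sum (f := fun j ↦ B i j * Real.exp (y i + y j))
          (fun j _ ↦ mul_nonneg (hB i j) (Real.exp_pos _).le) (mem_univ (σ i))
  have hsum := sum_le_sum fun i (_ : i ∈ univ) ↦ hrow i
  rw [sum_add_distrib, sum_add_distrib, Equiv.sum_comp σ y] at hsum
  rw [scalingPotential]
  linarith

theorem hasGradientAt_scalingPotential (hB : ∀ i j, B i j = B j i) (y : EuclideanSpace ℝ V) :
    HasGradientAt (scalingPotential B)
      (WithLp.toLp 2 fun i ↦ ∑ j, B i j * Real.exp (y i + y j) - 1) y := by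
  have hcoord (i : V) : HasFDerivAt (fun y : EuclideanSpace ℝ V ↦ y i)
      (EuclideanSpace.proj i : EuclideanSpace ℝ V →L[ℝ] ℝ) y :=
    (EuclideanSpace.proj i : EuclideanSpace ℝ V →L[ℝ] ℝ).hasFDerivAt
  have hderiv := ((HasFDerivAt.fun_sum fun i (_ : i ∈ univ) ↦
    HasFDerivAt.fun_sum fun j (_ : j ∈ univ) ↦
      ((hcoord i).fun_add (hcoord j)).exp.const_mul (B i j)).const_mul (1 / 2)).fun_sub
    (HasFDerivAt.fun_sum fun i (_ : i ∈ univ) ↦ hcoord i)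
  rw [hasGradientAt_iff_hasFDerivAt]
  refine hderiv.congr_fderiv ?_
  ext d
  have hswap : ∑ i, ∑ j, B i j * (Real.exp (y i + y j) * d j) =
      ∑ i, ∑ j, B i j * (Real.exp (y i + y j) * d i) := by
    rw [sum_comm]
    exact sum_congr rfl fun i _ ↦ sum_congr rfl fun j _ ↦ by rw [hB j i, add_comm (y j)]
  have hinner : inner ℝ (WithLp.toLp 2 fun i ↦ ∑ j, B i j * Real.exp (y i + y j) - 1) d =
      ∑ i, ∑ j, B i j * (Real.exp (y i + y j) * d i) - ∑ i, d i := by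
    simp [PiLp.inner_apply, mul_sub, mul_sum, mul_comm, mul_assoc]
  simp [hinner, sum_add_distrib, hswap, ← two_mul]

theorem exists_scaling_sum_sq_row_sum_sub_one_lt (hB : ∀ i j, 0 ≤ B i j)
    (hBs : ∀ i j, B i j = B j i) {σ : Equiv.Perm V} (hσ : ∀ i, 0 < B i (σ i)) {ε : ℝ}
    (hε : 0 < ε) :
    ∃ d : V → ℝ, (∀ i, 0 < d i) ∧ ∑ i, (∑ j, B i j * (d i * d j) - 1) ^ 2 < ε := by
  obtain ⟨y, hy⟩ := exists_norm_gradient_lt (hasGradientAt_scalingPotential hBs)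
    (bddBelow_range_scalingPotential hB hσ) (Real.sqrt_pos.2 hε)
  refine ⟨fun i ↦ Real.exp (y i), fun i ↦ Real.exp_pos _, ?_⟩
  simpa [EuclideanSpace.norm_eq, Real.sqrt_lt_sqrt_iff_of_pos hε, Real.exp_add] using hy

end Scaling

theorem exists_perm_or_exists_deficient {V : Type*} [Finite V] {r : V → V → Prop}
    (hr : ∀ i j, r i j → r j i) : (∃ σ : Equiv.Perm V, ∀ i, r i (σ i)) ∨
      ∃ S T : Finset V, Disjoint S T ∧ #T < #S ∧ ∀ i ∈ S, ∀ j, r i j → j ∈ T := by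
  classical
  have := Fintype.ofFinite V
  by_cases hall : ∀ s : Finset V, #s ≤ #{j | ∃ i ∈ s, r i j}
  · obtain ⟨f, hf, hrf⟩ := (Fintype.all_card_le_filter_rel_iff_exists_injective r).1 hall
    exact .inl ⟨.ofBijective f (Finite.injective_iff_bijective.1 hf), hrf⟩
  · push Not at hall
    obtain ⟨s, hs⟩ := hall
    set N : Finset V := {j | ∃ i ∈ s, r i j} with hN
    -- Cancelling `s ∩ N` from both sides of the violated Hall condition makes them disjoint.
    refine .inr ⟨s \ N, N \ s, disjoint_sdiff_sdiff, ?_, fun i hi j hij ↦ ?_⟩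
    · have hS := card_sdiff_add_card_inter s N
      have hT := card_sdiff_add_card_inter N s
      rw [inter_comm] at hT
      omega
    · simp only [hN, mem_sdiff, mem_filter_univ, not_exists, not_and] at hi ⊢
      exact ⟨⟨i, hi.1, hij⟩, fun hj ↦ hi.2 j hj (hr i j hij)⟩

section Main

variable {V 𝕜 : Type*} [Fintype V] [DecidableEq V] [RCLike 𝕜] {G : SimpleGraph V}
  {A : Matrix V V 𝕜}

theorem card_add_nonnegIndex_submatrix_le (hA : A.IsHermitian) {S T : Finset V}
    (hST : Disjoint S T) (hS : ∀ i ∈ S, ∀ j ∉ T, A i j = 0) :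
    #S + nonnegIndex (hA.submatrix (Subtype.val : {i // i ∉ S ∪ T} → V)) ≤ nonnegIndex hA := by
  let e : S ⊕ {i // i ∉ S ∪ T} → V := Sum.elim Subtype.val Subtype.val
  have he : Function.Injective e :=
    Subtype.val_injective.sumElim Subtype.val_injective fun i j hij ↦
      j.2 (mem_union_left T (hij ▸ i.2))
  have heT (j) : e j ∉ T := by
    rcases j with j | j
    · exact disjoint_left.1 hST j.2
    · exact fun hj ↦ j.2 (mem_union_right S hj)
  have hblocks : A.submatrix e e = fromBlocks 0 0 0 (A.submatrix Subtype.val Subtype.val) := by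
    ext (i | i) (j | j)
    · exact hS i i.2 _ (heT (.inl j))
    · exact hS i i.2 _ (heT (.inr j))
    · have hzero : A (e (.inl j)) (e (.inr i)) = 0 := hS j j.2 _ (heT (.inr i))
      exact (hA.apply _ _).symm.trans (hzero.symm ▸ star_zero 𝕜)
    · rfl
  calc #S + nonnegIndex (hA.submatrix (Subtype.val : {i // i ∉ S ∪ T} → V))
    _ ≤ nonnegIndex (hblocks ▸ hA.submatrix e) := by
      rw [← Fintype.card_coe]
      exact card_add_nonnegIndex_le_fromBlocks_zero _ _
    _ = nonnegIndex (hA.submatrix e) := by simp only [hblocks]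
    _ ≤ nonnegIndex hA := nonnegIndex_submatrix_le hA he

namespace IsHermitianWeighting

theorem card_le_of_perm (hA : IsHermitianWeighting G A) (hC3 : G.CliqueFree 3) (hC4 : C4Free G)
    {σ : Equiv.Perm V} (hσ : ∀ i, A i (σ i) ≠ 0) :
    Fintype.card V ≤ 4 * nonnegIndex hA.isHermitian := by
  obtain ⟨d, hd, hsum⟩ := exists_scaling_sum_sq_row_sum_sub_one_lt (B := fun i j ↦ ‖A i j‖ ^ 2)
    (fun i j ↦ sq_nonneg _) (fun i j ↦ by rw [norm_apply_comm hA.isHermitian])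
    (σ := σ) (fun i ↦ by have := hσ i; positivity) one_pos
  let w : V → 𝕜 := fun i ↦ (√(d i) : ℝ)
  have hw (i : V) : ‖w i‖ ^ 2 = d i := by
    rw [RCLike.norm_ofReal, sq_abs, Real.sq_sqrt (hd i).le]
  have hD : Function.Injective (diagonal w).mulVec := by
    refine mulVec_injective_of_isUnit ?_
    rw [isUnit_diagonal, Pi.isUnit_iff]
    exact fun i ↦ isUnit_iff_ne_zero.2 fun h ↦ (hd i).ne' (by simpa [h] using (hw i).symm)
  have hC := hA.diagonal_congruence w
  have hentry (i j : V) :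
      ‖((diagonal w)ᴴ * A * diagonal w) i j‖ ^ 2 = ‖A i j‖ ^ 2 * (d i * d j) := by
    rw [diagonal_conjTranspose, mul_diagonal, diagonal_mul, norm_mul, norm_mul, Pi.star_apply,
      norm_star, mul_pow, mul_pow, hw, hw]
    ring
  have hcard := hC.card_sub_le hC3 hC4
  simp only [hentry] at hcard
  have hlt : (Fintype.card V : ℝ) < 4 * nonnegIndex hC.isHermitian + 1 := by linarith
  have hle : Fintype.card V ≤ 4 * nonnegIndex hC.isHermitian := by
    exact Nat.lt_succ_iff.1 (by exact_mod_cast hlt)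
  exact hle.trans (Nat.mul_le_mul_left 4 (nonnegIndex_conjTranspose_mul_mul_le _ hD))

theorem card_le_four_mul_nonnegIndex (hA : IsHermitianWeighting G A) (hC3 : G.CliqueFree 3)
    (hC4 : C4Free G) : Fintype.card V ≤ 4 * nonnegIndex hA.isHermitian := by
  induction hn : Fintype.card V using Nat.strong_induction_on generalizing V with
  | _ n ih =>
  have hsymm (i j : V) (hij : A i j ≠ 0) : A j i ≠ 0 := by
    rwa [← norm_ne_zero_iff, norm_apply_comm hA.isHermitian, norm_ne_zero_iff]
  obtain ⟨σ, hσ⟩ | ⟨S, T, hST, hlt, hS⟩ := exists_perm_or_exists_deficient hsymm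
  · exact hn ▸ hA.card_le_of_perm hC3 hC4 hσ
  · have hcard : Fintype.card {i // i ∉ S ∪ T} + (#S + #T) = n := by
      rw [← card_union_of_disjoint hST, ← hn, Fintype.card_subtype_compl, Fintype.card_coe]
      exact Nat.sub_add_cancel (card_le_univ _)
    have hrest := ih _ (by omega) (hA.submatrix (Subtype.val : {i // i ∉ S ∪ T} → V))
      (hC3.comap (SimpleGraph.Embedding.comap (.subtype _) G).isContained)
      (hC4.comap (.subtype _)) rfl
    have hindex := card_add_nonnegIndex_submatrix_le hA.isHermitian hST
      fun i hi j hj ↦ not_not.1 (mt (hS i hi j) hj)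
    omega

end IsHermitianWeighting

theorem inertia_bound_girth_five_general (hC3 : G.CliqueFree 3) (hC4 : C4Free G)
    (hA : A.IsHermitian) (hsupp : ∀ i j, ¬ G.Adj i j → A i j = 0) :
    (Fintype.card V : ℝ) / 4 ≤ Fintype.card {i // 0 ≤ hA.eigenvalues i} := by
  rw [div_le_iff₀' four_pos]
  exact_mod_cast (IsHermitianWeighting.mk hA hsupp).card_le_four_mul_nonnegIndex hC3 hC4

end Main

/-- If `G` is a graph on `n` vertices of girth at least 5 (no cycles of length 3 or 4),
then every Hermitian weighted adjacency matrix of `G` has at least `n/4` non-negative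
eigenvalues. -/
theorem inertia_bound_girth_five (n : ℕ) (G : SimpleGraph (Fin n))
    (hC3 : ∀ a b c : Fin n, G.Adj a b → G.Adj b c → ¬ G.Adj c a)
    (hC4 : C4Free G)
    (A : Matrix (Fin n) (Fin n) ℂ) (hA : A.IsHermitian)
    (hsupp : ∀ i j, ¬ G.Adj i j → A i j = 0) :
    (n : ℝ) / 4 ≤ (Fintype.card {i : Fin n // 0 ≤ hA.eigenvalues i} : ℝ) := by
  have hfree : G.CliqueFree 3 := fun s hs ↦
    let ⟨a, b, c, hab, hac, hbc, _⟩ := SimpleGraph.is3Clique_iff.1 hs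
    hC3 a b c hab hbc hac.symm
  simpa using inertia_bound_girth_five_general hfree hC4 hA hsupp
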